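/- arXiv:1503.02939 — 4 statements merged into one kernel-verified Lean document; each statement's English description precedes it below -/
import Mathlib

section
/- Let α ∈ R be a unit and let i, j be natural numbers. Let A be an α^i-circulant k×k matrix over R and let M be the diagonal k×k matrix with diagonal vector (1, α^j, α^{2j}, …, α^{(k−1)j}). Then M is invertible and M^{-1}·A·M is a β-circulant matrix, where β = α^i·(α^{-1})^{kj} (i.e., β = α^{i−kj}). Moreover, if α² = 1, then M is orthogonal, i.e., M·M^t = I_k. -/
/-- The `α`-circulant matrix generated by the vector `v`. -/
def cir {R : Type*} [CommRing R] {k : ℕ} (α : R) (v : Fin k → R) :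
    Matrix (Fin k) (Fin k) R :=
  Matrix.of fun i j =>
    if h : (i : ℕ) ≤ (j : ℕ) then v ⟨(j : ℕ) - (i : ℕ), by have := j.isLt; omega⟩
    else α * v ⟨k + (j : ℕ) - (i : ℕ), by have := i.isLt; have := j.isLt; omega⟩

/-- The matrix `T_α`, with ones on the superdiagonal, `α` in the lower left corner,
and zeros elsewhere. -/
def Tmat {R : Type*} [CommRing R] (k : ℕ) (α : R) : Matrix (Fin k) (Fin k) R :=
  Matrix.of fun i j =>
    if (i : ℕ) + 1 = (j : ℕ) then 1
    else if (i : ℕ) = k - 1 ∧ (j : ℕ) = 0 then α else 0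

theorem cir_apply_of_le {R : Type*} [CommRing R] {k : ℕ} (α : R) (v : Fin k → R) {a b : Fin k}
    (hab : a ≤ b) : cir α v a b = v ⟨b - a, by omega⟩ :=
  dif_pos hab

theorem cir_apply_of_lt {R : Type*} [CommRing R] {k : ℕ} (α : R) (v : Fin k → R) {a b : Fin k}
    (hba : b < a) : cir α v a b = α * v ⟨k + b - a, by omega⟩ :=
  dif_neg (Nat.not_le.mpr hba)

/-- The diagonal matrix `diag(1, γ, γ², …, γ^(k-1))`; the matrix `M` of the main theorem is
`powDiagonal k (α ^ j)`. -/
def powDiagonal {R : Type*} [MonoidWithZero R] (k : ℕ) (γ : R) : Matrix (Fin k) (Fin k) R :=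
  Matrix.diagonal fun l : Fin k => γ ^ (l : ℕ)

theorem isUnit_powDiagonal {R : Type*} [Semiring R] (k : ℕ) {γ : R} (hγ : IsUnit γ) :
    IsUnit (powDiagonal k γ) :=
  (Pi.isUnit_iff.mpr fun l : Fin k => hγ.pow (l : ℕ)).map (Matrix.diagonalRingHom (Fin k) R)

theorem powDiagonal_mul_transpose_self {R : Type*} [Semiring R] (k : ℕ) {γ : R}
    (hγ : γ ^ 2 = 1) : powDiagonal k γ * (powDiagonal k γ).transpose = 1 := by
  have pow_mul_pow_self (l : Fin k) : γ ^ (l : ℕ) * γ ^ (l : ℕ) = 1 := by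
    rw [← pow_add, ← two_mul, pow_mul, hγ, one_pow]
  simp only [powDiagonal, Matrix.diagonal_transpose, Matrix.diagonal_mul_diagonal,
    pow_mul_pow_self, Matrix.diagonal_one]

theorem cir_pow_mul_mul_powDiagonal {R : Type*} [CommRing R] {k : ℕ} (γ β : R)
    (v : Fin k → R) :
    cir (γ ^ k * β) v * powDiagonal k γ =
      powDiagonal k γ * cir β fun l => γ ^ (l : ℕ) * v l := by
  ext a b
  rw [powDiagonal, Matrix.mul_diagonal, Matrix.diagonal_mul]
  rcases le_or_gt a b with hab | hba
  · have pow_split : γ ^ (b : ℕ) = γ ^ (a : ℕ) * γ ^ ((b : ℕ) - a) := by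
      rw [← pow_add, Nat.add_sub_of_le hab]
    rw [cir_apply_of_le _ _ hab, cir_apply_of_le _ _ hab, pow_split]
    ring
  · -- Below the diagonal the index wraps around, which costs the extra factor `γ ^ k`.
    have pow_wrap : γ ^ k * γ ^ (b : ℕ) = γ ^ (a : ℕ) * γ ^ (k + b - a) := by
      rw [← pow_add, ← pow_add, Nat.add_sub_of_le (by omega)]
    rw [cir_apply_of_lt _ _ hba, cir_apply_of_lt _ _ hba]
    linear_combination β * v ⟨k + b - a, by omega⟩ * pow_wrap

theorem powDiagonal_inv_mul_cir_mul_powDiagonal {R : Type*} [CommRing R] {k : ℕ} {γ : R}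
    (hγ : IsUnit γ) (β : R) (v : Fin k → R) :
    (powDiagonal k γ)⁻¹ * cir β v * powDiagonal k γ =
      cir (β * Ring.inverse γ ^ k) fun l => γ ^ (l : ℕ) * v l := by
  have parameter_eq : β = γ ^ k * (β * Ring.inverse γ ^ k) := by
    rw [mul_left_comm, ← mul_pow, Ring.mul_inverse_cancel γ hγ, one_pow, mul_one]
  have det_isUnit : IsUnit (powDiagonal k γ).det :=
    (Matrix.isUnit_iff_isUnit_det _).mp (isUnit_powDiagonal k hγ)
  calc (powDiagonal k γ)⁻¹ * cir β v * powDiagonal k γ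
      = (powDiagonal k γ)⁻¹ * (cir (γ ^ k * (β * Ring.inverse γ ^ k)) v * powDiagonal k γ) := by
        rw [← parameter_eq, Matrix.mul_assoc]
    _ = cir (β * Ring.inverse γ ^ k) fun l => γ ^ (l : ℕ) * v l := by
        rw [cir_pow_mul_mul_powDiagonal, Matrix.nonsing_inv_mul_cancel_left _ _ det_isUnit]

theorem stmt10_general {R : Type*} [CommRing R] {k : ℕ} {γ : R} (hγ : IsUnit γ) (β : R)
    (v : Fin k → R) :
    IsUnit (powDiagonal k γ) ∧
    (powDiagonal k γ)⁻¹ * cir β v * powDiagonal k γ =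
      cir (β * Ring.inverse γ ^ k) (fun l => γ ^ (l : ℕ) * v l) ∧
    (γ ^ 2 = 1 → powDiagonal k γ * (powDiagonal k γ).transpose = 1) :=
  ⟨isUnit_powDiagonal k hγ, powDiagonal_inv_mul_cir_mul_powDiagonal hγ β v,
    powDiagonal_mul_transpose_self k⟩

/-- For a unit `α`, conjugation by the diagonal matrix with diagonal
`(1, α^j, α^{2j}, …, α^{(k-1)j})` turns an `α^i`-circulant matrix into an
`α^{i-kj}`-circulant matrix; if `α² = 1` the conjugating matrix is orthogonal. -/
theorem stmt10 {R : Type*} [CommRing R] {k : ℕ} (hk : 1 ≤ k) (α : R) (hα : IsUnit α)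
    (i j : ℕ) (v : Fin k → R) (A : Matrix (Fin k) (Fin k) R) (hA : A = cir (α ^ i) v)
    (M : Matrix (Fin k) (Fin k) R)
    (hM : M = Matrix.diagonal fun l : Fin k => α ^ ((l : ℕ) * j)) :
    IsUnit M ∧
    (∃ u : Fin k → R, M⁻¹ * A * M = cir (α ^ i * Ring.inverse α ^ (k * j)) u) ∧
    (α ^ 2 = 1 → M * M.transpose = 1) := by
  obtain rfl : M = powDiagonal k (α ^ j) := by simp only [hM, powDiagonal, ← pow_mul']
  obtain ⟨isUnit, conj_eq, orthogonal⟩ := stmt10_general (hα.pow j) (α ^ i) v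
  rw [← Ring.inverse_pow, ← pow_mul', ← hA] at conj_eq
  exact ⟨isUnit, ⟨_, conj_eq⟩, fun hα2 => orthogonal (by rw [pow_right_comm, hα2, one_pow])⟩
end

section
/- Let I be an ideal of R, let α ∈ R, and let N, M be invertible k×k matrices over R such that N^{-1}·C·M is α-circulant for every α-circulant k×k matrix C over R. Let a, b ∈ R^k be vectors such that every entry of the matrix N^{-1}·cir_α(a)·M − cir_α(b) lies in I. Then for every vector w ∈ I^k (all components in I) there exists a vector u ∈ I^k such that N^{-1}·cir_α(a + w)·M = cir_α(b + u). (That is, every lift of cir_α(a) modulo I is carried by the transformation (N,M) to a lift of cir_α(b) modulo I.) -/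
/-!
Reduction modulo `I` is a ring homomorphism, so it commutes with matrix products and sends
`α`-circulants to circulants of the reduced parameter. Hence a transform of a lift of `cir α a`
reduces to the same matrix as `cir β b`, and if it is itself a circulant `cir β c`, comparing
first rows gives `c ≡ b` modulo `I`.
-/

section CirculantMatrix

variable {R S : Type*} [CommRing R] [CommRing S] {k l : ℕ}

theorem cir_zero_row [NeZero k] (α : R) (v : Fin k → R) : cir α v 0 = v := by
  ext j
  simp [cir]

theorem cir_injective (α : R) : Function.Injective (cir (k := k) α) := by
  intro v w hvw
  ext j
  have : NeZero k := j.neZero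
  rw [← cir_zero_row α v, hvw, cir_zero_row]

theorem map_cir (f : R →+* S) (α : R) (v : Fin k → R) :
    (cir α v).map f = cir (f α) (f ∘ v) := by
  ext i j
  simp only [cir, Matrix.map_apply, Matrix.of_apply, Function.comp_apply]
  split_ifs
  · rfl
  · exact map_mul f _ _

theorem comp_eq_of_mul_cir_mul_eq_cir (f : R →+* S) {α β : R}
    {P : Matrix (Fin l) (Fin k) R} {M : Matrix (Fin k) (Fin l) R}
    {a a' : Fin k → R} {b c : Fin l → R}
    (hab : (P * cir α a * M).map f = (cir β b).map f) (ha : f ∘ a' = f ∘ a)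
    (hc : P * cir α a' * M = cir β c) : f ∘ c = f ∘ b := by
  apply cir_injective (f β)
  calc cir (f β) (f ∘ c) = (P * cir α a' * M).map f := by rw [hc, map_cir]
    _ = (P * cir α a * M).map f := by simp only [Matrix.map_mul, map_cir, ha]
    _ = cir (f β) (f ∘ b) := by rw [hab, map_cir]

end CirculantMatrix

theorem stmt11_general {R : Type*} [CommRing R] {k l : ℕ} (I : Ideal R) (α β : R)
    (P : Matrix (Fin l) (Fin k) R) (M : Matrix (Fin k) (Fin l) R)
    (a : Fin k → R) (b : Fin l → R)
    (hab : ∀ p q, (P * cir α a * M - cir β b) p q ∈ I)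
    (w : Fin k → R) (hw : ∀ p, w p ∈ I)
    (hcirc : ∃ c : Fin l → R, P * cir α (a + w) * M = cir β c) :
    ∃ u : Fin l → R, (∀ p, u p ∈ I) ∧ P * cir α (a + w) * M = cir β (b + u) := by
  obtain ⟨c, hc⟩ := hcirc
  have hab_mod : (P * cir α a * M).map (Ideal.Quotient.mk I) =
      (cir β b).map (Ideal.Quotient.mk I) :=
    Matrix.ext fun p q => Ideal.Quotient.eq.2 (hab p q)
  have haw_mod : Ideal.Quotient.mk I ∘ (a + w) = Ideal.Quotient.mk I ∘ a :=
    funext fun p => Ideal.Quotient.eq.2 (by simpa using hw p)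
  have hcb_mod := comp_eq_of_mul_cir_mul_eq_cir _ hab_mod haw_mod hc
  exact ⟨c - b, fun p => Ideal.Quotient.eq.1 (congrFun hcb_mod p), by rw [hc, add_sub_cancel]⟩

/-- Suppose conjugation `C ↦ N⁻¹CM` by the invertible matrices `N, M` preserves
`α`-circulancy, and suppose `N⁻¹ · cir_α(a) · M ≡ cir_α(b)` modulo the ideal `I`.
Then every lift `cir_α(a + w)` of `cir_α(a)` (with `w ∈ I^k`) is carried to a lift
`cir_α(b + u)` of `cir_α(b)` with `u ∈ I^k`. -/
theorem stmt11 {R : Type*} [CommRing R] {k : ℕ} (hk : 1 ≤ k) (I : Ideal R) (α : R)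
    (N M : Matrix (Fin k) (Fin k) R) (hN : IsUnit N) (hM : IsUnit M)
    (hcirc : ∀ v : Fin k → R, ∃ u : Fin k → R, N⁻¹ * cir α v * M = cir α u)
    (a b : Fin k → R)
    (hab : ∀ p q : Fin k, (N⁻¹ * cir α a * M - cir α b) p q ∈ I)
    (w : Fin k → R) (hw : ∀ p, w p ∈ I) :
    ∃ u : Fin k → R, (∀ p, u p ∈ I) ∧ N⁻¹ * cir α (a + w) * M = cir α (b + u) :=
  stmt11_general I α α N⁻¹ M a b hab w hw (hcirc (a + w))
end

section
/- Let α ∈ R with α² = 1, let a = (a_0,…,a_{k−1}) ∈ R^k and A = cir_α(a). Then A·A^t = −I_k (equivalently, the code generated by (I_k | A) is self-orthogonal with respect to the standard bilinear form) if and only if 1 + Σ_{i=0}^{k−1} a_i² = 0 and, for every j with 1 ≤ j ≤ ⌊k/2⌋, Σ_{i=0}^{j−1} α·a_i·a_{k−j+i} + Σ_{i=j}^{k−1} a_i·a_{i−j} = 0. -/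
/-!
Extend `a` to a function `f` on `ℤ` with `α * f (n + k) = f n`. Then `cir α a i j = f (j - i)`, and
since `α ^ 2 = 1` the products `f (n + u) * f (n + v)` are `k`-periodic, so that the `(i, l)` entry
of `A * Aᵀ` is the autocorrelation of `f` at lag `l - i`. Autocorrelation is even in the lag, and
lags `d` and `k - d` agree up to the factor `α`, so the lags `0 ≤ d ≤ k / 2` determine all of them.
-/

open Finset
open scoped Matrix

theorem sum_range_add_of_periodic {M : Type*} [AddCommMonoid M] {f : ℤ → M} {k : ℕ}
    (hf : Function.Periodic f k) (d : ℤ) :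
    ∑ m ∈ range k, f (m + d) = ∑ m ∈ range k, f m := by
  have shift_one (d : ℤ) : ∑ m ∈ range k, f (m + (d + 1)) = ∑ m ∈ range k, f (m + d) := by
    cases k with
    | zero => simp
    | succ n =>
      rw [sum_range_succ, sum_range_succ']
      congr 1
      · refine sum_congr rfl fun m _ => ?_
        push_cast
        ring_nf
      · rw [← hf (_ + d)]
        push_cast
        ring_nf
  induction d using Int.induction_on with
  | zero => simp
  | succ n ih => rw [shift_one, ih]
  | pred n ih => rw [← ih, ← shift_one, sub_add_cancel]

section CommSemiring

variable {R : Type*} [CommSemiring R] {k : ℕ} {α : R} {f : ℤ → R}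

/-- Quasi-periodicity of a function on `ℤ` with period `k` and multiplier `α`. The multiplier stands
on the side of the shifted argument, matching the factor `α` below the diagonal of `cir α v`. -/
def IsQuasiPeriodic (k : ℕ) (α : R) (f : ℤ → R) : Prop :=
  ∀ n, α * f (n + k) = f n

/-- The autocorrelation of `f` at lag `d`, taken over the window `0, …, k - 1`. -/
def autocorrelation (k : ℕ) (f : ℤ → R) (d : ℤ) : R :=
  ∑ m ∈ range k, f m * f (m - d)

theorem exists_isQuasiPeriodic_extension [NeZero k] (α : Rˣ) (a : Fin k → R) :
    ∃ f : ℤ → R, IsQuasiPeriodic k (α : R) f ∧ (fun i : Fin k => f (i : ℕ)) = a := by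
  let g : ℤ × Fin k → R := fun p => ↑(α ^ (-p.1)) * a p.2
  let e := Int.divModEquiv k
  refine ⟨g ∘ e, fun n => ?_, funext fun i => ?_⟩
  · obtain ⟨⟨q, r⟩, rfl⟩ := e.symm.surjective n
    have add_period : e.symm (q, r) + k = e.symm (q + 1, r) := by
      simp only [e, Int.divModEquiv_symm_apply]
      ring
    simp only [add_period, Function.comp_apply, Equiv.apply_symm_apply, g]
    rw [← mul_assoc, ← Units.val_mul, ← zpow_one_add]
    ring_nf
  · have natCast_eq : ((i : ℕ) : ℤ) = e.symm (0, i) := by simp [e]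
    simp [natCast_eq, g]

namespace IsQuasiPeriodic

theorem periodic_mul (hf : IsQuasiPeriodic k α f) (hα : α ^ 2 = 1) (u v : ℤ) :
    Function.Periodic (fun n => f (n + u) * f (n + v)) k := fun n =>
  calc f (n + k + u) * f (n + k + v)
      = α ^ 2 * (f (n + u + k) * f (n + v + k)) := by
        rw [hα, one_mul, add_right_comm n k u, add_right_comm n k v]
    _ = (α * f (n + u + k)) * (α * f (n + v + k)) := by ring
    _ = f (n + u) * f (n + v) := by rw [hf, hf]

theorem sum_mul_sub_eq_autocorrelation (hf : IsQuasiPeriodic k α f) (hα : α ^ 2 = 1) (i l : ℤ) :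
    ∑ m ∈ range k, f (m - i) * f (m - l) = autocorrelation k f (l - i) := by
  have shifted := sum_range_add_of_periodic (hf.periodic_mul hα 0 (i - l)) (-i)
  simpa [autocorrelation, sub_eq_add_neg, add_assoc] using shifted

theorem autocorrelation_neg (hf : IsQuasiPeriodic k α f) (hα : α ^ 2 = 1) (d : ℤ) :
    autocorrelation k f (-d) = autocorrelation k f d := by
  rw [← zero_sub, ← hf.sum_mul_sub_eq_autocorrelation hα d 0]
  simp only [autocorrelation, sub_zero, mul_comm]

theorem mul_autocorrelation_sub_period (hf : IsQuasiPeriodic k α f) (d : ℤ) :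
    α * autocorrelation k f (d - k) = autocorrelation k f d := by
  simp only [autocorrelation, mul_sum]
  refine sum_congr rfl fun m _ => ?_
  rw [mul_left_comm, ← sub_add, hf]

theorem autocorrelation_eq_mul_period_sub (hf : IsQuasiPeriodic k α f) (hα : α ^ 2 = 1) (d : ℤ) :
    autocorrelation k f d = α * autocorrelation k f (k - d) := by
  rw [← hf.autocorrelation_neg hα (k - d), neg_sub, hf.mul_autocorrelation_sub_period]

theorem autocorrelation_natCast (hf : IsQuasiPeriodic k α f) {j : ℕ} (hj : j ≤ k) :
    autocorrelation k f j =
      ∑ i ∈ range j, α * f i * f (k - j + i : ℕ) + ∑ i ∈ Ico j k, f i * f (i - j : ℕ) := by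
  rw [autocorrelation, ← sum_range_add_sum_Ico _ hj]
  congr 1 <;> refine sum_congr rfl fun i hi => ?_
  · rw [← hf (i - j), mul_left_comm, mul_assoc]
    congr 4
    omega
  · rw [Nat.cast_sub (mem_Ico.1 hi).1]

theorem autocorrelation_eq_zero_of_forall_le_half (hf : IsQuasiPeriodic k α f) (hα : α ^ 2 = 1)
    (half : ∀ j : ℕ, 1 ≤ j → j ≤ k / 2 → autocorrelation k f j = 0) {d : ℤ} (hd : d ≠ 0)
    (hdk : d.natAbs < k) : autocorrelation k f d = 0 := by
  have natAbs_eq : autocorrelation k f d = autocorrelation k f d.natAbs := by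
    obtain h | h := d.natAbs_eq
    · rw [← h]
    · rw [← hf.autocorrelation_neg hα d, ← neg_eq_iff_eq_neg.2 h]
  rw [natAbs_eq]
  by_cases h : d.natAbs ≤ k / 2
  · exact half _ (by omega) h
  · rw [hf.autocorrelation_eq_mul_period_sub hα, ← Nat.cast_sub hdk.le,
      half _ (by omega) (by omega), mul_zero]

end IsQuasiPeriodic

end CommSemiring

namespace IsQuasiPeriodic

variable {R : Type*} [CommRing R] {k : ℕ} {α : R} {f : ℤ → R}

theorem cir_apply (hf : IsQuasiPeriodic k α f) (i j : Fin k) :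
    cir α (fun i : Fin k => f (i : ℕ)) i j = f ((j : ℕ) - (i : ℕ)) := by
  simp only [cir, Matrix.of_apply]
  split_ifs with h
  · rw [Nat.cast_sub h]
  · rw [← hf (_ - _)]
    congr 2
    omega

theorem cir_mul_transpose_apply (hf : IsQuasiPeriodic k α f) (hα : α ^ 2 = 1) (i l : Fin k) :
    (cir α (fun i : Fin k => f (i : ℕ)) * (cir α fun i : Fin k => f (i : ℕ))ᵀ) i l =
      autocorrelation k f ((l : ℕ) - (i : ℕ)) := by
  simp only [Matrix.mul_apply, Matrix.transpose_apply, hf.cir_apply]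
  rw [Fin.sum_univ_eq_sum_range fun m : ℕ => f (m - (i : ℕ)) * f (m - (l : ℕ)),
    hf.sum_mul_sub_eq_autocorrelation hα]

theorem cir_mul_transpose_eq_smul_one_iff [NeZero k] (hf : IsQuasiPeriodic k α f)
    (hα : α ^ 2 = 1) (c : R) :
    cir α (fun i : Fin k => f (i : ℕ)) * (cir α fun i : Fin k => f (i : ℕ))ᵀ = c • 1 ↔
      autocorrelation k f 0 = c ∧
        ∀ j : ℕ, 1 ≤ j → j ≤ k / 2 → autocorrelation k f j = 0 := by
  simp only [← Matrix.ext_iff, hf.cir_mul_transpose_apply hα, Matrix.smul_apply, smul_eq_mul]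
  constructor
  · intro entries
    refine ⟨by simpa using entries 0 0, fun j hj_pos hj_half => ?_⟩
    have zero_ne : (0 : Fin k) ≠ ⟨j, by omega⟩ :=
      Fin.ne_of_val_ne (by simpa using Nat.ne_of_lt hj_pos)
    simpa [Matrix.one_apply_ne zero_ne] using entries 0 ⟨j, by omega⟩
  · rintro ⟨lag_zero, half⟩ i l
    obtain rfl | hil := eq_or_ne i l
    · simpa using lag_zero
    · have val_ne := Fin.val_ne_of_ne hil
      rw [Matrix.one_apply_ne hil, mul_zero]
      exact hf.autocorrelation_eq_zero_of_forall_le_half hα half (by omega) (by omega)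

end IsQuasiPeriodic

/-- For `α² = 1` and `A = cir_α(a)`, we have `A·Aᵀ = -I_k` if and only if
`1 + ∑ aᵢ² = 0` and, for all `1 ≤ j ≤ ⌊k/2⌋`,
`∑_{i<j} α·aᵢ·a_{k-j+i} + ∑_{j≤i<k} aᵢ·a_{i-j} = 0`.
(All indices of `a` occurring below are `< k`, so reducing them mod `k` is
the identity.) -/
theorem stmt13 {R : Type*} [CommRing R] {k : ℕ} (hk : 0 < k) (α : R) (hα : α ^ 2 = 1)
    (a : Fin k → R) :
    cir α a * (cir α a).transpose = -1 ↔
      (1 + ∑ i : Fin k, a i ^ 2 = 0 ∧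
        ∀ j : ℕ, 1 ≤ j → j ≤ k / 2 →
          (∑ i ∈ Finset.range j,
              α * a ⟨i % k, Nat.mod_lt _ hk⟩ * a ⟨(k - j + i) % k, Nat.mod_lt _ hk⟩) +
            (∑ i ∈ Finset.Ico j k,
              a ⟨i % k, Nat.mod_lt _ hk⟩ * a ⟨(i - j) % k, Nat.mod_lt _ hk⟩) = 0) := by
  have : NeZero k := ⟨hk.ne'⟩
  obtain ⟨u, rfl⟩ : IsUnit α := .of_pow_eq_one hα two_ne_zero
  obtain ⟨f, hf, rfl⟩ := exists_isQuasiPeriodic_extension u a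
  have lag_zero : autocorrelation k f 0 = ∑ i : Fin k, f (i : ℕ) ^ 2 := by
    simp only [autocorrelation, sub_zero, ← pow_two, Fin.sum_univ_eq_sum_range (f · ^ 2)]
  rw [← neg_one_smul R, hf.cir_mul_transpose_eq_smul_one_iff hα, lag_zero,
    eq_neg_iff_add_eq_zero, add_comm]
  refine and_congr_right fun _ => forall₃_congr fun j hj_pos hj_half => ?_
  rw [hf.autocorrelation_natCast (by omega)]
  congr! 3 with i hi i hi
  · have hij := mem_range.1 hi
    simp only [Nat.mod_eq_of_lt (show i < k by omega),
      Nat.mod_eq_of_lt (show k - j + i < k by omega)]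
  · have hik := (mem_Ico.1 hi).2
    simp only [Nat.mod_eq_of_lt hik, Nat.mod_eq_of_lt (show i - j < k by omega)]
end

section
/- Let C be a ℤ/4ℤ-submodule of (ℤ/4ℤ)^n that is self-orthogonal, i.e., ⟨c, c'⟩ = 0 for all c, c' ∈ C, and let φ: ℤ/4ℤ → ℤ/2ℤ denote the reduction homomorphism applied coordinatewise. Then the image φ(C) ⊆ (ℤ/2ℤ)^n is a self-orthogonal ℤ/2ℤ-linear code, and every element of φ(C) has Hamming weight divisible by 4; that is, φ(C) is a doubly-even self-orthogonal binary code. -/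
/-!
Odd elements of `ℤ/4ℤ` square to `1` and even ones to `0`, so `⟨c, c⟩` counts, modulo `4`, the odd
coordinates of `c`, and these form the support of its reduction modulo `2`.
-/

section CoordinatewiseMap

variable {ι R S : Type*} [Semiring R] [Semiring S]

/-- Coordinatewise application of a ring homomorphism `σ`, as a `σ`-semilinear map. For surjective
`σ`, this makes the image of a linear code over `R` a linear code over `S`, namely
`Submodule.map (coordinatewiseMap σ) C`. -/
def coordinatewiseMap (σ : R →+* S) : (ι → R) →ₛₗ[σ] (ι → S) where
  toFun c := σ ∘ c
  map_add' c d := funext fun i => map_add σ (c i) (d i)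
  map_smul' a c := funext fun i => map_mul σ a (c i)

variable [Fintype ι]

/-- A linear code is self-orthogonal if any two codewords, equal or not, have standard bilinear
form `0`. -/
def IsSelfOrthogonal (C : Submodule R (ι → R)) : Prop :=
  ∀ c ∈ C, ∀ d ∈ C, c ⬝ᵥ d = 0

theorem IsSelfOrthogonal.map {C : Submodule R (ι → R)} (hC : IsSelfOrthogonal C)
    (σ : R →+* S) [RingHomSurjective σ] :
    IsSelfOrthogonal (C.map (coordinatewiseMap σ)) := by
  rintro _ ⟨c, hc, rfl⟩ _ ⟨d, hd, rfl⟩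
  calc σ ∘ c ⬝ᵥ σ ∘ d
    _ = σ (c ⬝ᵥ d) := (σ.map_dotProduct c d).symm
    _ = 0 := by rw [hC c hc d hd, map_zero]

end CoordinatewiseMap

theorem natCard_ne_zero_eq_hammingNorm {ι : Type*} [Fintype ι] {β : ι → Type*}
    [∀ i, DecidableEq (β i)] [∀ i, Zero (β i)] (x : ∀ i, β i) :
    Nat.card {i // x i ≠ 0} = hammingNorm x :=
  Nat.subtype_card _ (by simp)

section ReductionModTwo

variable (σ : ZMod 4 →+* ZMod 2)

theorem zmod_four_mul_self_eq_ite (a : ZMod 4) : a * a = if σ a ≠ 0 then 1 else 0 := by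
  obtain rfl : σ = ZMod.castHom (by decide : 2 ∣ 4) (ZMod 2) := Subsingleton.elim _ _
  revert a
  decide

variable {ι : Type*} [Fintype ι]

theorem dotProduct_self_eq_hammingNorm_comp (c : ι → ZMod 4) :
    c ⬝ᵥ c = (hammingNorm (σ ∘ c) : ZMod 4) := by
  calc c ⬝ᵥ c
    _ = ∑ i, if σ (c i) ≠ 0 then 1 else 0 :=
      Finset.sum_congr rfl fun i _ => zmod_four_mul_self_eq_ite σ (c i)
    _ = (hammingNorm (σ ∘ c) : ZMod 4) := Finset.sum_boole _ _

theorem four_dvd_hammingNorm_comp_iff (c : ι → ZMod 4) :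
    4 ∣ hammingNorm (σ ∘ c) ↔ c ⬝ᵥ c = 0 := by
  rw [dotProduct_self_eq_hammingNorm_comp σ, ZMod.natCast_eq_zero_iff]

theorem IsSelfOrthogonal.four_dvd_hammingNorm_of_mem_map [RingHomSurjective σ]
    {C : Submodule (ZMod 4) (ι → ZMod 4)} (hC : IsSelfOrthogonal C) {x : ι → ZMod 2}
    (hx : x ∈ C.map (coordinatewiseMap σ)) : 4 ∣ hammingNorm x := by
  obtain ⟨c, hc, rfl⟩ := hx
  exact (four_dvd_hammingNorm_comp_iff σ c).2 (hC c hc c hc)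

end ReductionModTwo

/-- The coordinatewise mod-2 reduction of a self-orthogonal `ℤ/4ℤ`-linear code is a
doubly-even self-orthogonal binary linear code: it is a `ℤ/2ℤ`-submodule, it is
self-orthogonal, and all of its elements have Hamming weight divisible by `4`. -/
theorem stmt16 {n : ℕ} (C : Submodule (ZMod 4) (Fin n → ZMod 4))
    (hC : ∀ c ∈ C, ∀ c' ∈ C, ∑ i, c i * c' i = 0) :
    ∃ D : Submodule (ZMod 2) (Fin n → ZMod 2),
      (D : Set (Fin n → ZMod 2)) =
        (fun c : Fin n → ZMod 4 =>
          fun i => ZMod.castHom (by norm_num : (2 : ℕ) ∣ 4) (ZMod 2) (c i)) ''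
          (C : Set (Fin n → ZMod 4)) ∧
      (∀ x ∈ D, ∀ y ∈ D, ∑ i, x i * y i = 0) ∧
      (∀ x ∈ D, 4 ∣ Nat.card {i : Fin n // x i ≠ 0}) := by
  let φ := ZMod.castHom (by norm_num : (2 : ℕ) ∣ 4) (ZMod 2)
  have : RingHomSurjective φ := ⟨ZMod.castHom_surjective _⟩
  have hC : IsSelfOrthogonal C := hC
  refine ⟨C.map (coordinatewiseMap φ), rfl, hC.map φ, fun x hx => ?_⟩
  rw [natCard_ne_zero_eq_hammingNorm]
  exact hC.four_dvd_hammingNorm_of_mem_map φ hx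
end
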